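/- The sequence {A_n^{1/n}}_{n≥1} is strictly log-concave; that is, for every integer n ≥ 2, (A_n^{1/n})^2 > A_{n−1}^{1/(n−1)} · A_{n+1}^{1/(n+1)}. -/

import Mathlib

/-!
Write `r k = A (k+1) / A k`, `l k = log (r k)` and, for `n = k + 1`,
`D k = (k+1) * l k - log (A (k+1))`. After taking logarithms and clearing denominators, strict
log-concavity at `n = k + 1` is the inequality `k (k+1) (l (k+1) - l k) < 2 * D k`
(`root_logconcave_of_log`).

Dividing the recurrence by `A (k+1)` gives `r (k+1) = p (k+2) - q (k+2) / r k` with explicit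
rational functions `p`, `q`. Hence `r` is nondecreasing, because `p` increases faster than `q`,
and its increments satisfy `r (k+1) - r k ≤ 52 / (k (k+1))` for `k ≥ 2`, because those of `p` are
at most `51 / ((k+2) (k+3))` while the other term contributes only a fraction `1 / 19 ^ 2` of the
previous increment (`ratio_step`, `ratio_bounds`). Since `r k ≥ 19` for `k ≥ 2`, it follows that
`k (k+1) (l (k+1) - l k) ≤ 52 / 19 < 3`. On the other hand
`D (k+1) - D k = (k+1) (l (k+1) - l k) ≥ 0`, so `2 * D k ≥ 2 * D 2 = 2 * log (1445 ^ 2 / 73 ^ 3) ≥ 3`.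
The case `n = 2` is the numerical inequality `1445 * 5 ^ 3 < 73 ^ 3`.
-/

/-- Logarithmic form of strict log-concavity of the roots, at three consecutive terms
`a, b, c` with indices `t, t + 1, t + 2`. -/
lemma root_logconcave_of_log {a b c t : ℝ} (ha : 0 < a) (hb : 0 < b) (hc : 0 < c) (ht : 0 < t)
    (h : t * (t + 1) * ((Real.log c - Real.log b) - (Real.log b - Real.log a)) <
      2 * ((t + 1) * (Real.log b - Real.log a) - Real.log b)) :
    a ^ (1 / t) * c ^ (1 / (t + 2)) < (b ^ (1 / (t + 1))) ^ 2 := by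
  rw [Real.rpow_def_of_pos ha, Real.rpow_def_of_pos hb, Real.rpow_def_of_pos hc, ← Real.exp_add,
    ← Real.exp_nat_mul, Real.exp_lt_exp]
  have key : (Nat.cast 2 : ℝ) * (Real.log b * (1 / (t + 1))) -
      (Real.log a * (1 / t) + Real.log c * (1 / (t + 2))) =
      (2 * ((t + 1) * (Real.log b - Real.log a) - Real.log b) -
        t * (t + 1) * ((Real.log c - Real.log b) - (Real.log b - Real.log a))) /
        (t * (t + 1) * (t + 2)) := by
    push_cast
    field_simp
    ring
  have hpos := div_pos (sub_pos.2 h) (by positivity : 0 < t * (t + 1) * (t + 2))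
  rw [← key] at hpos
  linarith

/-- The two-sided bound on the increments of the ratios propagates along the recurrence;
`x, y, z` are three consecutive ratios. -/
lemma ratio_step {t x y z : ℝ} (ht : 2 ≤ t) (hx : 19 ≤ x) (hxy : x ≤ y)
    (hd : y - x ≤ 52 / ((t + 1) * t))
    (hy : y = (34 * (t + 2) ^ 3 - 51 * (t + 2) ^ 2 + 27 * (t + 2) - 5) / (t + 2) ^ 3
      - (t + 1) ^ 3 / (t + 2) ^ 3 * x⁻¹)
    (hz : z = (34 * (t + 3) ^ 3 - 51 * (t + 3) ^ 2 + 27 * (t + 3) - 5) / (t + 3) ^ 3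
      - (t + 2) ^ 3 / (t + 3) ^ 3 * y⁻¹) :
    y ≤ z ∧ z - y ≤ 52 / ((t + 2) * (t + 1)) := by
  have hx0 : 0 < x := by linarith
  have hy0 : 0 < y := by linarith
  obtain ⟨s, hs, rfl⟩ : ∃ s : ℝ, 0 ≤ s ∧ t = s + 2 := ⟨t - 2, by linarith, by ring⟩
  set p2 := (34 * (s + 2 + 2) ^ 3 - 51 * (s + 2 + 2) ^ 2 + 27 * (s + 2 + 2) - 5) / (s + 2 + 2) ^ 3
    with hp2
  set p3 := (34 * (s + 2 + 3) ^ 3 - 51 * (s + 2 + 3) ^ 2 + 27 * (s + 2 + 3) - 5) / (s + 2 + 3) ^ 3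
    with hp3
  set q2 := (s + 2 + 1) ^ 3 / (s + 2 + 2) ^ 3 with hq2
  set q3 := (s + 2 + 2) ^ 3 / (s + 2 + 3) ^ 3 with hq3
  have hvu : y⁻¹ ≤ x⁻¹ := inv_anti₀ hx0 hxy
  have hv0 : 0 < y⁻¹ := inv_pos.2 hy0
  have hv1 : y⁻¹ ≤ 1 := inv_le_one_of_one_le₀ (by linarith)
  have hq2pos : 0 ≤ q2 := by positivity
  have hq2one : q2 ≤ 1 := by
    rw [hq2, div_le_one (by positivity)]
    gcongr
    norm_num
  have hq : q2 ≤ q3 := by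
    rw [hq2, hq3, div_le_div_iff₀ (by positivity) (by positivity), ← mul_pow, ← mul_pow]
    exact pow_le_pow_left₀ (by positivity) (by nlinarith) 3
  have hpq : q3 - q2 ≤ p3 - p2 := by
    have : p3 - p2 - (q3 - q2) =
        ((34 * (s + 2 + 3) ^ 3 - 51 * (s + 2 + 3) ^ 2 + 27 * (s + 2 + 3) - 5
            - (s + 2 + 2) ^ 3) * (s + 2 + 2) ^ 3
          - (34 * (s + 2 + 2) ^ 3 - 51 * (s + 2 + 2) ^ 2 + 27 * (s + 2 + 2) - 5
            - (s + 2 + 1) ^ 3) * (s + 2 + 3) ^ 3) / ((s + 2 + 2) ^ 3 * (s + 2 + 3) ^ 3) := by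
      rw [hp2, hp3, hq2, hq3]
      field_simp
      ring
    have h0 : 0 ≤ p3 - p2 - (q3 - q2) := by
      rw [this]
      apply div_nonneg _ (by positivity)
      ring_nf
      positivity
    linarith
  have hp : p3 - p2 ≤ 51 / ((s + 2 + 2) * (s + 2 + 3)) := by
    have : 51 / ((s + 2 + 2) * (s + 2 + 3)) - (p3 - p2) =
        (51 * (s + 2 + 2) ^ 2 * (s + 2 + 3) ^ 2
          - ((34 * (s + 2 + 3) ^ 3 - 51 * (s + 2 + 3) ^ 2 + 27 * (s + 2 + 3) - 5) * (s + 2 + 2) ^ 3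
          - (34 * (s + 2 + 2) ^ 3 - 51 * (s + 2 + 2) ^ 2 + 27 * (s + 2 + 2) - 5)
            * (s + 2 + 3) ^ 3)) / ((s + 2 + 2) ^ 3 * (s + 2 + 3) ^ 3) := by
      rw [hp2, hp3]
      field_simp
    have h0 : 0 ≤ 51 / ((s + 2 + 2) * (s + 2 + 3)) - (p3 - p2) := by
      rw [this]
      apply div_nonneg _ (by positivity)
      ring_nf
      positivity
    linarith
  have huv : x⁻¹ - y⁻¹ ≤ 52 / ((s + 2 + 1) * (s + 2)) / 361 := by
    have h1 : x⁻¹ - y⁻¹ = (y - x) / (x * y) := by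
      field_simp
    rw [h1]
    apply div_le_div₀ (by positivity) hd (by norm_num)
    nlinarith
  have hfin : 51 / ((s + 2 + 2) * (s + 2 + 3)) + 52 / ((s + 2 + 1) * (s + 2)) / 361 ≤
      52 / ((s + 2 + 2) * (s + 2 + 1)) := by
    rw [← sub_nonneg]
    have : 52 / ((s + 2 + 2) * (s + 2 + 1)) -
        (51 / ((s + 2 + 2) * (s + 2 + 3)) + 52 / ((s + 2 + 1) * (s + 2)) / 361) =
        (361 * 52 * (s + 2) * (s + 2 + 3) - 361 * 51 * (s + 2 + 1) * (s + 2)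
          - 52 * (s + 2 + 2) * (s + 2 + 3)) /
        (361 * (s + 2) * (s + 2 + 1) * (s + 2 + 2) * (s + 2 + 3)) := by
      field_simp
      ring
    rw [this]
    apply div_nonneg _ (by positivity)
    ring_nf
    positivity
  constructor
  · nlinarith [mul_nonneg hq2pos (sub_nonneg.2 hvu),
      mul_nonneg (sub_nonneg.2 hq) (sub_nonneg.2 hv1)]
  · nlinarith [mul_nonneg (sub_nonneg.2 hq2one) (sub_nonneg.2 hvu),
      mul_nonneg (sub_nonneg.2 hq) hv0.le]

/-- Positivity, and monotonicity of the ratios of consecutive terms with a quantitative upper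
bound on their increments. -/
lemma ratio_bounds (A : ℕ → ℝ)
    (hrec : ∀ k : ℕ, ((k : ℝ) + 2) ^ 3 * A (k + 2) =
        (34 * ((k : ℝ) + 2) ^ 3 - 51 * ((k : ℝ) + 2) ^ 2 + 27 * ((k : ℝ) + 2) - 5) * A (k + 1)
          - ((k : ℝ) + 1) ^ 3 * A k)
    (h2 : A 2 = 73) (h3 : A 3 = 1445) (h4 : A 4 = 33001) (k : ℕ) (hk : 2 ≤ k) :
    0 < A k ∧ 19 ≤ A (k + 1) / A k ∧ A (k + 1) / A k ≤ A (k + 2) / A (k + 1) ∧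
      A (k + 2) / A (k + 1) - A (k + 1) / A k ≤ 52 / (((k : ℝ) + 1) * k) := by
  have hr : ∀ k : ℕ, 0 < A (k + 1) → A (k + 2) / A (k + 1) =
      (34 * ((k : ℝ) + 2) ^ 3 - 51 * ((k : ℝ) + 2) ^ 2 + 27 * ((k : ℝ) + 2) - 5) / ((k : ℝ) + 2) ^ 3
      - ((k : ℝ) + 1) ^ 3 / ((k : ℝ) + 2) ^ 3 * (A (k + 1) / A k)⁻¹ := by
    intro k hk1
    have h := hrec k
    have hA : A (k + 2) = ((34 * ((k : ℝ) + 2) ^ 3 - 51 * ((k : ℝ) + 2) ^ 2 + 27 * ((k : ℝ) + 2) - 5)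
        * A (k + 1) - ((k : ℝ) + 1) ^ 3 * A k) / ((k : ℝ) + 2) ^ 3 := by
      rw [← h]
      field_simp
    rw [hA, inv_div]
    field_simp
  induction k, hk using Nat.le_induction with
  | base => norm_num [h2, h3, h4]
  | succ k hk ih =>
    obtain ⟨hpos, h19, hmono, hinc⟩ := ih
    have hpos1 : 0 < A (k + 1) := by
      have : 0 < A (k + 1) / A k := by linarith
      exact (div_pos_iff_of_pos_right hpos).1 this
    have hpos2 : 0 < A (k + 2) := by
      have : 0 < A (k + 2) / A (k + 1) := by linarith
      exact (div_pos_iff_of_pos_right hpos1).1 this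
    have hz := hr (k + 1) hpos2
    have e2 : ((k + 1 : ℕ) : ℝ) + 2 = (k : ℝ) + 3 := by push_cast; ring
    have e1 : ((k + 1 : ℕ) : ℝ) + 1 = (k : ℝ) + 2 := by push_cast; ring
    rw [e2, e1] at hz
    obtain ⟨ha, hb⟩ := ratio_step (by exact_mod_cast hk) h19 hmono hinc (hr k hpos1) hz
    refine ⟨hpos1, h19.trans hmono, ha, ?_⟩
    rw [e1]
    push_cast
    exact hb

/-- The sequence `{A_n^{1/n}}_{n ≥ 1}` of n-th roots of the Apéry numbers is
strictly log-concave. -/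
theorem stmt_5 (A : ℕ → ℝ) (hA0 : A 0 = 1) (hA1 : A 1 = 5)
    (hrec : ∀ n : ℕ, 2 ≤ n →
      (n : ℝ) ^ 3 * A n =
        (34 * (n : ℝ) ^ 3 - 51 * (n : ℝ) ^ 2 + 27 * (n : ℝ) - 5) * A (n - 1)
          - ((n : ℝ) - 1) ^ 3 * A (n - 2)) :
    ∀ n : ℕ, 2 ≤ n →
      A (n - 1) ^ ((1 : ℝ) / ((n : ℝ) - 1)) * A (n + 1) ^ ((1 : ℝ) / ((n : ℝ) + 1)) <
        (A n ^ ((1 : ℝ) / (n : ℝ))) ^ 2 := by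
  have h2 : A 2 = 73 := by
    have h := hrec 2 le_rfl
    norm_num [hA0, hA1] at h
    linarith
  have h3 : A 3 = 1445 := by
    have h := hrec 3 (by norm_num)
    norm_num [hA1, h2] at h
    linarith
  have h4 : A 4 = 33001 := by
    have h := hrec 4 (by norm_num)
    norm_num [h2, h3] at h
    linarith
  have hrec' : ∀ k : ℕ, ((k : ℝ) + 2) ^ 3 * A (k + 2) =
        (34 * ((k : ℝ) + 2) ^ 3 - 51 * ((k : ℝ) + 2) ^ 2 + 27 * ((k : ℝ) + 2) - 5) * A (k + 1)
          - ((k : ℝ) + 1) ^ 3 * A k := by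
    intro k
    have h := hrec (k + 2) (by omega)
    have e : k + 2 - 1 = k + 1 := by omega
    rw [e, Nat.add_sub_cancel] at h
    push_cast at h
    rw [h]
    ring
  have hb := ratio_bounds A hrec' h2 h3 h4
  -- `D k ≥ D 2 ≥ 3 / 2`
  have hD : ∀ k : ℕ, 2 ≤ k → (3 : ℝ) / 2 ≤
      ((k : ℝ) + 1) * (Real.log (A (k + 1)) - Real.log (A k)) - Real.log (A (k + 1)) := by
    intro k hk
    induction k, hk using Nat.le_induction with
    | base =>
      have hexp : Real.exp 3 ≤ (1445 ^ 2 / 73 ^ 3) ^ 2 := by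
        have h1 : Real.exp 3 = Real.exp 1 ^ 3 := by
          rw [← Real.exp_nat_mul]
          norm_num
        have h2 : Real.exp 1 ^ 3 ≤ 2.72 ^ 3 :=
          pow_le_pow_left₀ (Real.exp_pos 1).le (by linarith [Real.exp_one_lt_d9]) 3
        rw [h1]
        refine h2.trans ?_
        norm_num
      have hlog := (Real.le_log_iff_exp_le (by positivity)).2 hexp
      rw [Real.log_pow, Real.log_div (by norm_num) (by norm_num), Real.log_pow,
        Real.log_pow] at hlog
      norm_num [h2, h3] at hlog ⊢
      linarith
    | succ k hk ih =>
      obtain ⟨hp0, h19, hmono, -⟩ := hb k hk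
      have hp1 := (hb (k + 1) (by omega)).1
      have hp2 := (hb (k + 2) (by omega)).1
      have hl := Real.log_le_log (by linarith) hmono
      rw [Real.log_div hp1.ne' hp0.ne', Real.log_div hp2.ne' hp1.ne'] at hl
      push_cast
      have hk0 : (0 : ℝ) ≤ (k : ℝ) + 1 := by positivity
      have e : k + 1 + 1 = k + 2 := rfl
      rw [e]
      nlinarith [mul_nonneg hk0 (sub_nonneg.2 hl)]
  intro n hn
  obtain ⟨k, rfl⟩ : ∃ k, n = k + 1 := ⟨n - 1, by omega⟩
  have hk1 : 1 ≤ k := by omega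
  have e1 : ((k + 1 : ℕ) : ℝ) - 1 = k := by push_cast; ring
  have e2 : ((k + 1 : ℕ) : ℝ) + 1 = (k : ℝ) + 2 := by push_cast; ring
  rw [e1, e2, Nat.add_sub_cancel, Nat.cast_succ]
  have hkpos : (0 : ℝ) < k := by exact_mod_cast hk1
  rcases hk1.eq_or_lt with rfl | hk2
  · refine root_logconcave_of_log (by rw [hA1]; norm_num) (by rw [h2]; norm_num)
      (by rw [h3]; norm_num) hkpos ?_
    have h : Real.log (1445 * 5 ^ 3) < Real.log (73 ^ 3) :=
      Real.log_lt_log (by norm_num) (by norm_num)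
    rw [Real.log_mul (by norm_num) (by norm_num), Real.log_pow, Real.log_pow] at h
    norm_num [hA1, h2, h3] at h ⊢
    linarith
  · have hk2' : 2 ≤ k := hk2
    obtain ⟨hp0, h19, hmono, hinc⟩ := hb k hk2'
    have hp1 := (hb (k + 1) (by omega)).1
    have hp2 := (hb (k + 2) (by omega)).1
    refine root_logconcave_of_log hp0 hp1 hp2 hkpos ?_
    have hDk := hD k hk2'
    have hx0 : 0 < A (k + 1) / A k := by linarith
    have hy0 : 0 < A (k + 2) / A (k + 1) := by linarith
    have hl := Real.log_le_sub_one_of_pos (div_pos hy0 hx0)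
    rw [Real.log_div hy0.ne' hx0.ne', Real.log_div hp1.ne' hp0.ne',
      Real.log_div hp2.ne' hp1.ne'] at hl
    have hq : A (k + 2) / A (k + 1) / (A (k + 1) / A k) - 1 ≤ 52 / (((k : ℝ) + 1) * k) / 19 := by
      rw [div_sub_one hx0.ne']
      exact div_le_div₀ (by positivity) hinc (by norm_num) h19
    have hm := mul_le_mul_of_nonneg_left (hl.trans hq)
      (by positivity : (0 : ℝ) ≤ (k : ℝ) * (k + 1))
    have hc : (k : ℝ) * (k + 1) * (52 / (((k : ℝ) + 1) * k) / 19) = 52 / 19 := by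
      field_simp
    rw [hc] at hm
    have e : k + 1 + 1 = k + 2 := rfl
    rw [e]
    linarith
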